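/- With A = (0^{21},4,0,−4) and B = (0^{21},0,4,−4) in the Leech lattice, the 891 points of T_{AB} consist of: 1 vector of type (0^{21},4,4,0); 42 vectors of type (0^{20}(±4)^1,0,0,−4); 336 vectors of type (0^{16}(±2)^5,2,2,−2); and 512 vectors of type ((±1)^{21},1,1,−3). -/

import Mathlib

open scoped BigOperators

/-- A generator matrix of the extended binary Golay code (MOG coordinates). -/
def golayMatrix : Matrix (Fin 12) (Fin 24) (ZMod 2) :=
  !![0, 0, 0, 0, 0, 0, 0, 0, 0, 0, 0, 0, 0, 0, 0, 0, 1, 1, 1, 1, 1, 1, 1, 1;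
    0, 0, 0, 0, 0, 0, 0, 0, 0, 0, 0, 0, 1, 1, 1, 1, 0, 0, 0, 0, 1, 1, 1, 1;
    0, 0, 0, 0, 0, 0, 0, 0, 0, 0, 1, 1, 0, 0, 1, 1, 0, 0, 1, 1, 0, 0, 1, 1;
    0, 0, 0, 0, 0, 0, 0, 0, 0, 1, 0, 1, 0, 1, 0, 1, 0, 1, 0, 1, 0, 1, 0, 1;
    0, 0, 0, 0, 0, 0, 0, 0, 1, 0, 0, 1, 0, 1, 1, 0, 0, 1, 1, 0, 1, 0, 0, 1;
    0, 0, 0, 0, 0, 0, 1, 1, 0, 0, 0, 0, 0, 0, 1, 1, 0, 1, 1, 0, 0, 1, 0, 1;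
    0, 0, 0, 0, 0, 1, 0, 1, 0, 0, 0, 0, 0, 1, 0, 1, 0, 0, 1, 1, 0, 1, 1, 0;
    0, 0, 0, 0, 1, 0, 0, 1, 0, 0, 0, 0, 0, 1, 1, 0, 0, 1, 0, 1, 1, 1, 0, 0;
    0, 0, 0, 1, 0, 0, 0, 1, 0, 0, 0, 1, 0, 0, 0, 1, 0, 1, 1, 1, 1, 0, 0, 0;
    0, 0, 1, 0, 0, 0, 0, 1, 0, 0, 0, 1, 0, 0, 1, 0, 0, 0, 1, 0, 1, 1, 1, 0;
    0, 1, 0, 0, 0, 0, 0, 1, 0, 0, 0, 1, 0, 1, 0, 0, 0, 0, 0, 1, 1, 0, 1, 1;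
    1, 0, 0, 0, 0, 0, 0, 1, 0, 0, 0, 1, 0, 1, 1, 1, 0, 1, 0, 0, 0, 0, 1, 0]

/-- The extended binary Golay code `C₂₄`. -/
def GolayCode : Submodule (ZMod 2) (Fin 24 → ZMod 2) :=
  Submodule.span (ZMod 2) (Set.range fun i => golayMatrix i)

/-- Membership in the Leech lattice `Λ₂₄ ⊂ ℤ²⁴` (coordinates scaled by `√8`),
via the standard congruence characterization. -/
def IsLeech (x : Fin 24 → ℤ) : Prop :=
  ∃ m : ℤ, (m = 0 ∨ m = 1) ∧ (∀ i, (2:ℤ) ∣ (x i - m)) ∧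
    ((fun i => if (4:ℤ) ∣ (x i - m - 2) then (1 : ZMod 2) else 0) ∈ GolayCode) ∧
    (8:ℤ) ∣ ((∑ i, x i) - 4 * m)

/-- The inner product `⟨x, y⟩ = (Σ xᵢ yᵢ)/8` on the Leech lattice. -/
def leechInner (x y : Fin 24 → ℤ) : ℚ := (∑ i, (x i : ℚ) * (y i : ℚ)) / 8

/-- The lattice point `A = (0²¹, 4, 0, −4)`. -/
def vA : Fin 24 → ℤ := fun i => if i.val = 21 then 4 else if i.val = 23 then -4 else 0

/-- The lattice point `B = (0²¹, 0, 4, −4)`. -/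
def vB : Fin 24 → ℤ := fun i => if i.val = 22 then 4 else if i.val = 23 then -4 else 0

/-- `T_AB`: lattice points `T` with `|OT| = |AT| = |BT| = 2`. -/
def TAB : Set (Fin 24 → ℤ) :=
  {T | IsLeech T ∧ leechInner T T = 4 ∧
       leechInner (T - vA) (T - vA) = 4 ∧ leechInner (T - vB) (T - vB) = 4}

/-- Type 0: the vector `(0²¹, 4, 4, 0)`. -/
def IsType0 (T : Fin 24 → ℤ) : Prop :=
  T = fun i => if i.val = 21 ∨ i.val = 22 then 4 else 0

/-- Type 1: vectors `(0²⁰ (±4)¹, 0, 0, −4)`. -/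
def IsType1 (T : Fin 24 → ℤ) : Prop :=
  (∀ i : Fin 24, i.val < 21 → T i = 0 ∨ T i = 4 ∨ T i = -4) ∧
  Nat.card {i : Fin 24 // i.val < 21 ∧ T i ≠ 0} = 1 ∧
  T ⟨21, by omega⟩ = 0 ∧ T ⟨22, by omega⟩ = 0 ∧ T ⟨23, by omega⟩ = -4

/-- Type 2: vectors `(0¹⁶ (±2)⁵, 2, 2, −2)`. -/
def IsType2 (T : Fin 24 → ℤ) : Prop :=
  (∀ i : Fin 24, i.val < 21 → T i = 0 ∨ T i = 2 ∨ T i = -2) ∧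
  Nat.card {i : Fin 24 // i.val < 21 ∧ T i ≠ 0} = 5 ∧
  T ⟨21, by omega⟩ = 2 ∧ T ⟨22, by omega⟩ = 2 ∧ T ⟨23, by omega⟩ = -2

/-- Type 3: vectors `((±1)²¹, 1, 1, −3)`. -/
def IsType3 (T : Fin 24 → ℤ) : Prop :=
  (∀ i : Fin 24, i.val < 21 → T i = 1 ∨ T i = -1) ∧
  T ⟨21, by omega⟩ = 1 ∧ T ⟨22, by omega⟩ = 1 ∧ T ⟨23, by omega⟩ = -3

/-!
Every `T ∈ T_AB` ends in `(a + 4, a + 4, a)` with `a = T 23`, because `⟨T, A⟩ = ⟨T, B⟩ = 2`, and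
its first 21 coordinates have square sum `-(3a² + 16a)`. This forces `-5 ≤ a ≤ 0`; for odd `a` all
21 entries are odd, which excludes `a = -1` and `a = -5`. The four remaining values of `a` are the
four types, and in each of them the norm is so small that the minimum weight 8 of the Golay code
determines the vector: `a = 0` leaves only zeros and `a = -4` a single entry `± 4`; `a = -2` gives
an octad through the last three points with an odd number of minus signs among its other five
points; `a = -3` gives the codewords vanishing at the last three points.

There are `2 ^ 9` such codewords by rank–nullity. The minimum weight is 8 since all weights are
divisible by 4 and no four columns of the (self-orthogonal) generator matrix sum to zero. The balls
of radius 3 around the codewords therefore exhaust the vectors of odd weight, so five points lie in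
exactly one octad, and double counting gives 21 octads through three points.
-/

theorem natCard_subtype_eq_card {α β : Type*} {s : Finset α} {f : α → β} {p : β → Prop}
    (hinj : Set.InjOn f s) (hp : ∀ b, p b ↔ ∃ a ∈ s, f a = b) :
    Nat.card {b // p b} = s.card := by
  classical
  rw [Nat.subtype_card (s.image f) (by simp [hp]), Finset.card_image_of_injOn hinj]

section BinaryVectors

theorem zmod_two_eq_zero_or_eq_one (z : ZMod 2) : z = 0 ∨ z = 1 := by decide +revert

variable {ι : Type*} [Fintype ι]

theorem hammingNorm_eq_sum_val (x : ι → ZMod 2) : hammingNorm x = ∑ i, (x i).val := by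
  rw [hammingNorm, Finset.card_filter]
  refine Finset.sum_congr rfl fun i _ => ?_
  generalize x i = a
  decide +revert

theorem natCast_hammingNorm (x : ι → ZMod 2) : (hammingNorm x : ZMod 2) = ∑ i, x i := by
  simp [hammingNorm_eq_sum_val]

theorem hammingNorm_add_add_two_mul (x y : ι → ZMod 2) :
    hammingNorm (x + y) + 2 * hammingNorm (x * y) = hammingNorm x + hammingNorm y := by
  simp only [hammingNorm_eq_sum_val, Finset.mul_sum, ← Finset.sum_add_distrib, Pi.add_apply,
    Pi.mul_apply]
  refine Finset.sum_congr rfl fun i _ => ?_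
  generalize x i = a
  generalize y i = b
  decide +revert

theorem hammingNorm_add_le (x y : ι → ZMod 2) :
    hammingNorm (x + y) ≤ hammingNorm x + hammingNorm y := by
  have := hammingNorm_add_add_two_mul x y
  omega

theorem dotProduct_eq_zero_of_mem_span {R : Type*} [CommRing R] {S : Set (ι → R)}
    (hS : ∀ x ∈ S, ∀ y ∈ S, x ⬝ᵥ y = 0) {x y : ι → R}
    (hx : x ∈ Submodule.span R S) (hy : y ∈ Submodule.span R S) : x ⬝ᵥ y = 0 := by
  induction hx, hy using Submodule.span_induction₂ with
  | mem_mem x y hx hy => exact hS x hx y hy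
  | zero_left y _ => exact zero_dotProduct y
  | zero_right x _ => exact dotProduct_zero x
  | add_left x y z _ _ _ hxz hyz => rw [add_dotProduct, hxz, hyz, add_zero]
  | add_right x y z _ _ _ hxy hxz => rw [dotProduct_add, hxy, hxz, add_zero]
  | smul_left r x y _ _ h => rw [smul_dotProduct, h, smul_zero]
  | smul_right r x y _ _ h => rw [dotProduct_smul, h, smul_zero]

theorem four_dvd_hammingNorm_of_mem_span {S : Set (ι → ZMod 2)}
    (hweight : ∀ x ∈ S, 4 ∣ hammingNorm x) (horth : ∀ x ∈ S, ∀ y ∈ S, x ⬝ᵥ y = 0)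
    {x : ι → ZMod 2} (hx : x ∈ Submodule.span (ZMod 2) S) : 4 ∣ hammingNorm x := by
  induction hx using Submodule.span_induction with
  | mem x hx => exact hweight x hx
  | zero => simp
  | add x y hx hy hx4 hy4 =>
    have hinter : 2 ∣ hammingNorm (x * y) := by
      rw [← ZMod.natCast_eq_zero_iff, natCast_hammingNorm]
      exact dotProduct_eq_zero_of_mem_span horth hx hy
    have := hammingNorm_add_add_two_mul x y
    omega
  | smul a x _ hx4 =>
    obtain rfl | rfl := zmod_two_eq_zero_or_eq_one a
    · simp
    · rwa [one_smul]

variable [DecidableEq ι]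

/-- Binary vectors correspond to subsets of the index set, by taking supports. -/
def supportEquiv (ι : Type*) [Fintype ι] [DecidableEq ι] : (ι → ZMod 2) ≃ Finset ι where
  toFun x := {i | x i ≠ 0}
  invFun S i := if i ∈ S then 1 else 0
  left_inv x := by
    funext i
    simp only [Finset.mem_filter_univ]
    generalize x i = a
    decide +revert
  right_inv S := by ext i; simp

@[simp]
theorem mem_supportEquiv {x : ι → ZMod 2} {i : ι} : i ∈ supportEquiv ι x ↔ x i ≠ 0 :=
  Finset.mem_filter_univ i

theorem card_supportEquiv (x : ι → ZMod 2) : (supportEquiv ι x).card = hammingNorm x := rfl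

theorem card_odd_subsets {α : Type*} {W : Finset α} (hW : W.Nonempty) :
    (W.powerset.filter fun S => Odd S.card).card = 2 ^ (W.card - 1) := by
  have hdiff : ((W.powerset.filter fun S => Even S.card).card : ℤ) -
      (W.powerset.filter fun S => Odd S.card).card = 0 := by
    rw [← Finset.sum_powerset_neg_one_pow_card_of_nonempty hW, Finset.card_filter,
      Finset.card_filter, Nat.cast_sum, Nat.cast_sum, ← Finset.sum_sub_distrib]
    refine Finset.sum_congr rfl fun S _ => ?_
    rcases Nat.even_or_odd S.card with h | h
    · simp [h, Nat.not_odd_iff_even.2 h]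
    · simp [h, Nat.not_even_iff_odd.2 h]
  have hadd := Finset.card_filter_add_card_filter_not (s := W.powerset) fun S => Even S.card
  simp only [Nat.not_even_iff_odd] at hadd
  rw [Finset.card_powerset, ← mul_pow_sub_one hW.card_ne_zero] at hadd
  omega

theorem card_odd_weight [Nonempty ι] :
    Fintype.card {x : ι → ZMod 2 // Odd (hammingNorm x)} = 2 ^ (Fintype.card ι - 1) := by
  rw [Fintype.card_subtype, ← Finset.card_univ, ← card_odd_subsets Finset.univ_nonempty]
  exact Finset.card_equiv (supportEquiv ι) fun x => by simp [card_supportEquiv]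

theorem card_hammingNorm_eq (k : ℕ) :
    (Finset.univ.filter fun x : ι → ZMod 2 => hammingNorm x = k).card =
      (Fintype.card ι).choose k := by
  rw [← Finset.card_univ, ← Finset.card_powersetCard]
  exact Finset.card_equiv (supportEquiv ι) fun x => by simp [card_supportEquiv]

end BinaryVectors

/-- The three coordinates in which `vA` and `vB` are supported. -/
def tail : Finset (Fin 24) := {21, 22, 23}

section Golay

theorem golayMatrix_mem_golayCode (r : Fin 12) : golayMatrix r ∈ GolayCode :=
  Submodule.subset_span ⟨r, rfl⟩

theorem golayMatrix_dotProduct (r s : Fin 12) : golayMatrix r ⬝ᵥ golayMatrix s = 0 := by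
  decide +kernel +revert

theorem four_dvd_hammingNorm_golayMatrix (r : Fin 12) : 4 ∣ hammingNorm (golayMatrix r) := by
  decide +kernel +revert

theorem dotProduct_eq_zero_of_mem_golayCode {x y : Fin 24 → ZMod 2} (hx : x ∈ GolayCode)
    (hy : y ∈ GolayCode) : x ⬝ᵥ y = 0 :=
  dotProduct_eq_zero_of_mem_span (by rintro _ ⟨r, rfl⟩ _ ⟨s, rfl⟩; exact golayMatrix_dotProduct r s)
    hx hy

theorem four_dvd_hammingNorm_of_mem_golayCode {x : Fin 24 → ZMod 2} (hx : x ∈ GolayCode) :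
    4 ∣ hammingNorm x :=
  four_dvd_hammingNorm_of_mem_span
    (by rintro _ ⟨r, rfl⟩; exact four_dvd_hammingNorm_golayMatrix r)
    (by rintro _ ⟨r, rfl⟩ _ ⟨s, rfl⟩; exact golayMatrix_dotProduct r s) hx

/-- The `i`-th column of `golayMatrix`, packed into a bit vector so that sums of columns can be
evaluated quickly by the kernel. -/
def golayColumn (i : Fin 24) : BitVec 12 :=
  BitVec.ofFnLE fun r => decide (golayMatrix r i = 1)

theorem golayColumn_xor_ne_zero : ∀ i j : Fin 24, i < j → ∀ k, j < k → ∀ l, k < l →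
    golayColumn i ^^^ golayColumn j ^^^ golayColumn k ^^^ golayColumn l ≠ 0 := by
  decide +kernel

theorem golayColumn_xor_eq_zero {i j k l : Fin 24}
    (h : ∀ r, golayMatrix r i + golayMatrix r j + golayMatrix r k + golayMatrix r l = 0) :
    golayColumn i ^^^ golayColumn j ^^^ golayColumn k ^^^ golayColumn l = 0 := by
  have parity : ∀ a b c d : ZMod 2, a + b + c + d = 0 →
      (decide (a = 1) ^^ decide (b = 1) ^^ decide (c = 1) ^^ decide (d = 1)) = false := by decide
  ext r hr
  simpa [golayColumn] using parity _ _ _ _ (h ⟨r, hr⟩)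

-- The code is self-orthogonal, so the rows of the generator matrix are also parity checks.
theorem sum_golayMatrix_support {x : Fin 24 → ZMod 2} (hx : x ∈ GolayCode) (r : Fin 12) :
    ∑ i ∈ supportEquiv _ x, golayMatrix r i = 0 := by
  have horth := dotProduct_eq_zero_of_mem_golayCode (golayMatrix_mem_golayCode r) hx
  rw [dotProduct, ← Finset.sum_subset (Finset.subset_univ (supportEquiv _ x))
    (by simp +contextual)] at horth
  refine (Finset.sum_congr rfl fun i hi => ?_).trans horth
  have hxi : x i = 1 :=
    (zmod_two_eq_zero_or_eq_one (x i)).resolve_left (mem_supportEquiv.1 hi)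
  exact (mul_one _).symm.trans (congrArg _ hxi.symm)

theorem hammingNorm_ne_four_of_mem_golayCode {x : Fin 24 → ZMod 2} (hx : x ∈ GolayCode) :
    hammingNorm x ≠ 4 := by
  intro h4
  have hcard : (supportEquiv _ x).card = 4 := h4
  let e : Fin 4 ↪o Fin 24 := (supportEquiv _ x).orderEmbOfFin hcard
  refine golayColumn_xor_ne_zero (e 0) (e 1) (e.strictMono (by decide)) (e 2)
    (e.strictMono (by decide)) (e 3) (e.strictMono (by decide))
    (golayColumn_xor_eq_zero fun r => ?_)
  have hsum := sum_golayMatrix_support hx r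
  rwa [← Finset.map_orderEmbOfFin_univ _ hcard, Finset.sum_map, Fin.sum_univ_four] at hsum

theorem eight_le_hammingNorm_of_mem_golayCode {x : Fin 24 → ZMod 2} (hx : x ∈ GolayCode)
    (h0 : x ≠ 0) : 8 ≤ hammingNorm x := by
  have h4 := four_dvd_hammingNorm_of_mem_golayCode hx
  have hne := hammingNorm_ne_four_of_mem_golayCode hx
  have hpos := hammingNorm_pos_iff.2 h0
  omega

theorem linearIndependent_golayMatrix : LinearIndependent (ZMod 2) fun r => golayMatrix r := by
  let pivot : Fin 12 → Fin 24 := ![16, 12, 10, 9, 8, 6, 5, 4, 3, 2, 1, 0]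
  have hpivot : ∀ r s, golayMatrix r (pivot s) = if s = r then 1 else 0 := by decide +kernel
  refine LinearIndependent.of_comp (LinearMap.funLeft (ZMod 2) (ZMod 2) pivot) ?_
  convert Pi.linearIndependent_single_one (Fin 12) (ZMod 2) using 2 with r
  funext s
  simpa [Pi.single_apply] using hpivot r s

theorem finrank_golayCode : Module.finrank (ZMod 2) GolayCode = 12 := by
  rw [GolayCode, finrank_span_eq_card linearIndependent_golayMatrix, Fintype.card_fin]

theorem card_golayCode : Nat.card GolayCode = 2 ^ 12 := by
  rw [Module.natCard_eq_pow_finrank (K := ZMod 2), finrank_golayCode, Nat.card_zmod]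

/-- The restriction of Golay codewords to the last three coordinates. -/
def tailRestriction : GolayCode →ₗ[ZMod 2] (Fin 3 → ZMod 2) :=
  LinearMap.funLeft (ZMod 2) (ZMod 2) ![21, 22, 23] ∘ₗ GolayCode.subtype

theorem tailRestriction_surjective : Function.Surjective tailRestriction := by
  intro y
  let row (r : Fin 12) : GolayCode := ⟨golayMatrix r, golayMatrix_mem_golayCode r⟩
  refine ⟨y 0 • (row 3 + row 4) + y 1 • (row 2 + row 4) + y 2 • row 4, ?_⟩
  have h2 : tailRestriction (row 2) = ![0, 1, 1] := by decide +kernel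
  have h3 : tailRestriction (row 3) = ![1, 0, 1] := by decide +kernel
  have h4 : tailRestriction (row 4) = ![0, 0, 1] := by decide +kernel
  simp only [map_add, map_smul, h2, h3, h4]
  decide +revert

theorem finrank_ker_tailRestriction :
    Module.finrank (ZMod 2) (LinearMap.ker tailRestriction) = 9 := by
  have h := LinearMap.finrank_range_add_finrank_ker tailRestriction
  rw [LinearMap.range_eq_top.2 tailRestriction_surjective, finrank_top, finrank_golayCode,
    Module.finrank_fin_fun] at h
  omega

open Classical in
/-- The Golay codewords vanishing at the last three coordinates. -/
noncomputable def shortenedGolayCode : Finset (Fin 24 → ZMod 2) :=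
  {c | c ∈ GolayCode ∧ ∀ i ∈ tail, c i = 0}

theorem mem_shortenedGolayCode {c : Fin 24 → ZMod 2} :
    c ∈ shortenedGolayCode ↔ c ∈ GolayCode ∧ ∀ i ∈ tail, c i = 0 := by
  simp [shortenedGolayCode]

theorem card_shortenedGolayCode : shortenedGolayCode.card = 512 := by
  have hker : Nat.card (LinearMap.ker tailRestriction) = 512 := by
    rw [Module.natCard_eq_pow_finrank (K := ZMod 2), finrank_ker_tailRestriction, Nat.card_zmod]
    norm_num
  rw [← hker, ← Nat.card_eq_finsetCard]
  refine Nat.card_congr ((Equiv.subtypeEquivRight fun c => ?_).trans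
    (Equiv.subtypeSubtypeEquivSubtypeInter (· ∈ GolayCode) fun c => ∀ i ∈ tail, c i = 0).symm
    |>.trans (Equiv.subtypeEquivRight fun c => ?_))
  · exact mem_shortenedGolayCode
  · simp [tailRestriction, tail, funext_iff, Fin.forall_fin_succ]

theorem golayCode_ext_of_hammingNorm_add_lt {c d : Fin 24 → ZMod 2} (hc : c ∈ GolayCode)
    (hd : d ∈ GolayCode) (h : hammingNorm (c + d) < 8) : c = d := by
  by_contra hne
  have hsum : c + d ≠ 0 := by rwa [← ZModModule.sub_eq_add, sub_ne_zero]
  exact h.not_ge (eight_le_hammingNorm_of_mem_golayCode (add_mem hc hd) hsum)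

theorem odd_hammingNorm_add {c e : Fin 24 → ZMod 2} (hc : c ∈ GolayCode)
    (he : Odd (hammingNorm e)) : Odd (hammingNorm (c + e)) := by
  have h := hammingNorm_add_add_two_mul c e
  have h4 := four_dvd_hammingNorm_of_mem_golayCode hc
  rw [Nat.odd_iff] at he ⊢
  omega

theorem card_weight_one_or_three :
    Nat.card {e : Fin 24 → ZMod 2 // hammingNorm e = 1 ∨ hammingNorm e = 3} = 2 ^ 11 := by
  rw [Nat.card_eq_fintype_card, Fintype.card_subtype, Finset.filter_or,
    Finset.card_union_of_disjoint, card_hammingNorm_eq, card_hammingNorm_eq]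
  · decide
  · exact Finset.disjoint_filter.2 fun _ _ h => by omega

-- Sphere packing: the balls do not overlap, and `2 ^ 12 * (24 + 2024) = 2 ^ 23`.
theorem exists_golayCode_add_eq {v : Fin 24 → ZMod 2} (hv : Odd (hammingNorm v)) :
    ∃ c ∈ GolayCode, ∃ e, (hammingNorm e = 1 ∨ hammingNorm e = 3) ∧ c + e = v := by
  let f : GolayCode × {e : Fin 24 → ZMod 2 // hammingNorm e = 1 ∨ hammingNorm e = 3} →
      {v : Fin 24 → ZMod 2 // Odd (hammingNorm v)} := fun p =>
    ⟨p.1 + p.2, odd_hammingNorm_add p.1.2 (by rcases p.2.2 with h | h <;> rw [h] <;> decide)⟩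
  have hinj : Function.Injective f := by
    rintro ⟨⟨c, hc⟩, e, he⟩ ⟨⟨d, hd⟩, e', he'⟩ h
    have h : c + e = d + e' := congrArg Subtype.val h
    have hcd : c + d = e + e' := by
      rw [add_comm e, ← ZModModule.sub_eq_add c, ← ZModModule.sub_eq_add e',
        sub_eq_sub_iff_add_eq_add, h, add_comm]
    obtain rfl := golayCode_ext_of_hammingNorm_add_lt hc hd (by
      have := hammingNorm_add_le e e'
      rw [hcd]
      omega)
    obtain rfl := add_left_cancel h
    rfl
  have hcard : Nat.card {v : Fin 24 → ZMod 2 // Odd (hammingNorm v)} ≤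
      Nat.card (GolayCode × {e : Fin 24 → ZMod 2 // hammingNorm e = 1 ∨ hammingNorm e = 3}) := by
    rw [Nat.card_prod, card_golayCode, card_weight_one_or_three, Nat.card_eq_fintype_card,
      card_odd_weight, Fintype.card_fin]
    norm_num
  obtain ⟨⟨⟨c, hc⟩, e, he⟩, h⟩ := (hinj.bijective_of_nat_card_le hcard).2 ⟨v, hv⟩
  exact ⟨c, hc, e, he, congrArg Subtype.val h⟩

open Classical in
/-- The octads (Golay codewords of weight 8) whose support contains `P`. -/
noncomputable def octadsContaining (P : Finset (Fin 24)) : Finset (Fin 24 → ZMod 2) :=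
  {c | c ∈ GolayCode ∧ hammingNorm c = 8 ∧ P ⊆ supportEquiv _ c}

theorem mem_octadsContaining {P : Finset (Fin 24)} {c : Fin 24 → ZMod 2} :
    c ∈ octadsContaining P ↔ c ∈ GolayCode ∧ hammingNorm c = 8 ∧ P ⊆ supportEquiv _ c := by
  simp [octadsContaining]

theorem eq_one_of_mem_octadsContaining {P : Finset (Fin 24)} {c : Fin 24 → ZMod 2}
    (hc : c ∈ octadsContaining P) {i : Fin 24} (hi : i ∈ P) : c i = 1 :=
  (zmod_two_eq_zero_or_eq_one (c i)).resolve_left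
    (mem_supportEquiv.1 ((mem_octadsContaining.1 hc).2.2 hi))

theorem octadsContaining_nonempty {S : Finset (Fin 24)} (hS : S.card = 5) :
    (octadsContaining S).Nonempty := by
  obtain ⟨v, rfl⟩ := (supportEquiv (Fin 24)).surjective S
  rw [card_supportEquiv] at hS
  obtain ⟨c, hc, e, he, rfl⟩ := exists_golayCode_add_eq (v := v) (by rw [hS]; decide)
  have hc0 : c ≠ 0 := by
    rintro rfl
    rw [zero_add] at hS
    omega
  have hc8 := eight_le_hammingNorm_of_mem_golayCode hc hc0
  have hweight := hammingNorm_add_add_two_mul (c + e) e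
  rw [add_assoc, ZModModule.add_self, add_zero, hS] at hweight
  have hdisj : (c + e) * e = 0 := hammingNorm_eq_zero.1 (by omega)
  refine ⟨c, mem_octadsContaining.2 ⟨hc, by omega, fun i hi => ?_⟩⟩
  rw [mem_supportEquiv] at hi ⊢
  have hei : e i = 0 := (mul_eq_zero.1 (congrFun hdisj i)).resolve_left hi
  rwa [Pi.add_apply, hei, add_zero] at hi

theorem octadsContaining_subsingleton {S : Finset (Fin 24)} (hS : 5 ≤ S.card)
    {c d : Fin 24 → ZMod 2} (hc : c ∈ octadsContaining S) (hd : d ∈ octadsContaining S) :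
    c = d := by
  rw [mem_octadsContaining] at hc hd
  have hinter : S ⊆ supportEquiv _ (c * d) := fun i hi => by
    simpa using ⟨mem_supportEquiv.1 (hc.2.2 hi), mem_supportEquiv.1 (hd.2.2 hi)⟩
  have hcard := Finset.card_le_card hinter
  rw [card_supportEquiv] at hcard
  have hweight := hammingNorm_add_add_two_mul c d
  exact golayCode_ext_of_hammingNorm_add_lt hc.1 hd.1 (by omega)

theorem card_octadsContaining_of_card_eq_five {S : Finset (Fin 24)} (hS : S.card = 5) :
    (octadsContaining S).card = 1 := by
  obtain ⟨c, hc⟩ := octadsContaining_nonempty hS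
  exact Finset.card_eq_one.2 ⟨c, Finset.eq_singleton_iff_unique_mem.2
    ⟨hc, fun d hd => octadsContaining_subsingleton hS.ge hd hc⟩⟩

-- Double count the pairs of an octad `c ⊇ P` and a 2-subset `D` of `c \ P`.
theorem card_octadsContaining_of_card_eq_three {P : Finset (Fin 24)} (hP : P.card = 3) :
    (octadsContaining P).card = 21 := by
  have hdouble := Finset.card_mul_eq_card_mul (s := octadsContaining P)
    (t := Pᶜ.powersetCard 2) (m := 10) (n := 1) (fun c D => D ⊆ supportEquiv _ c) ?_ ?_
  · rw [Finset.card_powersetCard, Finset.card_compl, hP, Fintype.card_fin] at hdouble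
    have hchoose : (24 - 3).choose 2 = 210 := by decide
    omega
  · intro c hc
    rw [mem_octadsContaining, ← card_supportEquiv] at hc
    have hpairs : (Pᶜ.powersetCard 2).bipartiteAbove (fun c D => D ⊆ supportEquiv _ c) c =
        (supportEquiv _ c \ P).powersetCard 2 := by
      ext D
      simp only [Finset.mem_bipartiteAbove, Finset.mem_powersetCard, Finset.subset_sdiff,
        Finset.subset_compl_iff_disjoint_right]
      tauto
    rw [hpairs, Finset.card_powersetCard, Finset.card_sdiff_of_subset hc.2.2, hc.2.1, hP]
    rfl
  · intro D hD
    obtain ⟨hDP, hD2⟩ := Finset.mem_powersetCard.1 hD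
    have hoctads : (octadsContaining P).bipartiteBelow (fun c D => D ⊆ supportEquiv _ c) D =
        octadsContaining (P ∪ D) := by
      ext c
      simp only [Finset.mem_bipartiteBelow, mem_octadsContaining, Finset.union_subset_iff,
        and_assoc]
    rw [hoctads, card_octadsContaining_of_card_eq_five]
    rw [Finset.card_union_of_disjoint (Finset.subset_compl_iff_disjoint_left.1 hDP), hP, hD2]

theorem card_support_sdiff_tail {c : Fin 24 → ZMod 2} (hc : c ∈ octadsContaining tail) :
    (supportEquiv _ c \ tail).card = 5 := by
  obtain ⟨-, hweight, htail⟩ := mem_octadsContaining.1 hc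
  rw [Finset.card_sdiff_of_subset htail, card_supportEquiv, hweight]
  rfl

end Golay

section Integers

variable {ι : Type*} {s : Finset ι} {u : ι → ℤ}

theorem eq_zero_of_sum_sq_eq_zero (h : ∑ i ∈ s, u i ^ 2 = 0) : ∀ i ∈ s, u i = 0 := fun i hi =>
  sq_eq_zero_iff.1 ((Finset.sum_eq_zero_iff_of_nonneg fun _ _ => sq_nonneg _).1 h i hi)

theorem exists_unit_of_sum_sq_eq_one (h : ∑ i ∈ s, u i ^ 2 = 1) :
    ∃ k ∈ s, (u k = 1 ∨ u k = -1) ∧ ∀ i ∈ s, i ≠ k → u i = 0 := by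
  classical
  obtain ⟨k, hk, hk0⟩ : ∃ k ∈ s, u k ≠ 0 := by
    by_contra! h0
    simp [Finset.sum_congr rfl fun i hi => congrArg (· ^ 2) (h0 i hi)] at h
  have hsplit := Finset.add_sum_erase s (fun i => u i ^ 2) hk
  have hpos : 0 < u k ^ 2 := by positivity
  have hrest : 0 ≤ ∑ i ∈ s.erase k, u i ^ 2 := Finset.sum_nonneg fun _ _ => sq_nonneg _
  refine ⟨k, hk, sq_eq_one_iff.1 (by omega), fun i hi hik => ?_⟩
  exact eq_zero_of_sum_sq_eq_zero (by omega) i (Finset.mem_erase.2 ⟨hik, hi⟩)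

theorem card_le_sum_sq (h : ∀ i ∈ s, u i ≠ 0) : (s.card : ℤ) ≤ ∑ i ∈ s, u i ^ 2 := by
  simpa using s.card_nsmul_le_sum (fun i => u i ^ 2) 1 fun i hi => sq_pos_of_ne_zero (h i hi)

theorem sq_eq_one_of_sum_sq_eq_card (h : ∀ i ∈ s, u i ≠ 0) (hsum : ∑ i ∈ s, u i ^ 2 = s.card) :
    ∀ i ∈ s, u i ^ 2 = 1 := fun i hi => by
  have hle : ∀ j ∈ s, 1 ≤ u j ^ 2 := fun j hj => sq_pos_of_ne_zero (h j hj)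
  exact ((Finset.sum_eq_sum_iff_of_le hle).1 (by simpa using hsum.symm) i hi).symm

theorem four_mul_val_le_sq {x : ℤ} {z : ZMod 2} (h : x ≡ 2 * z.val [ZMOD 4]) :
    4 * (z.val : ℤ) ≤ x ^ 2 := by
  obtain rfl | rfl := zmod_two_eq_zero_or_eq_one z
  · simpa using sq_nonneg x
  · have h : x % 4 = 2 := h
    have h2 : x ≤ -2 ∨ 2 ≤ x := by omega
    rw [ZMod.val_one, Nat.cast_one]
    rcases h2 with h2 | h2 <;> nlinarith

theorem four_mul_sum_val_le_sum_sq {c : ι → ZMod 2}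
    (h : ∀ i ∈ s, u i ≡ 2 * (c i).val [ZMOD 4]) :
    4 * ∑ i ∈ s, ((c i).val : ℤ) ≤ ∑ i ∈ s, u i ^ 2 := by
  rw [Finset.mul_sum]
  exact Finset.sum_le_sum fun i hi => four_mul_val_le_sq (h i hi)

end Integers

section Coordinates

theorem mem_tail_compl {i : Fin 24} : i ∈ tailᶜ ↔ i.val < 21 := by decide +revert

theorem card_tail_compl : tailᶜ.card = 21 := by decide

theorem sum_eq_sum_tail_compl_add {M : Type*} [AddCommMonoid M] (g : Fin 24 → M) :
    ∑ i, g i = ∑ i ∈ tailᶜ, g i + (g 21 + g 22 + g 23) := by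
  rw [← Finset.sum_compl_add_sum tail g, tail, Finset.sum_insert (by decide),
    Finset.sum_pair (by decide), add_assoc]

theorem hammingNorm_eq_of_forall_tail {c : Fin 24 → ZMod 2} {z : ZMod 2}
    (h : ∀ i ∈ tail, c i = z) :
    (hammingNorm c : ℤ) = ∑ i ∈ tailᶜ, ((c i).val : ℤ) + 3 * z.val := by
  rw [hammingNorm_eq_sum_val, Nat.cast_sum, sum_eq_sum_tail_compl_add, h 21 (by decide),
    h 22 (by decide), h 23 (by decide)]
  ring

/-- The vector that agrees with `f` on the first 21 coordinates and ends in `(a + 4, a + 4, a)`,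
the shape of the last three coordinates common to all points of `TAB`. -/
def withTail (f : Fin 24 → ℤ) (a : ℤ) : Fin 24 → ℤ :=
  fun i => if i.val < 21 then f i else if i.val < 23 then a + 4 else a

variable {f g T : Fin 24 → ℤ} {a : ℤ}

theorem withTail_apply {i : Fin 24} (hi : i ∈ tailᶜ) : withTail f a i = f i :=
  if_pos (mem_tail_compl.1 hi)

theorem withTail_congr (h : ∀ i ∈ tailᶜ, f i = g i) : withTail f a = withTail g a := by
  funext i
  unfold withTail
  split_ifs with hi
  exacts [h i (mem_tail_compl.2 hi), rfl, rfl]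

theorem withTail_self (h21 : T 21 = T 23 + 4) (h22 : T 22 = T 23 + 4) : withTail T (T 23) = T := by
  funext i
  fin_cases i <;> simp [withTail, *]

theorem withTail_modEq_four {i : Fin 24} (hi : i ∈ tail) : withTail f a i ≡ a [ZMOD 4] := by
  simp only [tail, Finset.mem_insert, Finset.mem_singleton] at hi
  rcases hi with rfl | rfl | rfl <;> simp [withTail]

theorem forall_withTail_modEq_iff {b : Fin 24 → ℤ} :
    (∀ i, withTail f a i ≡ b i [ZMOD 4]) ↔
      (∀ i ∈ tailᶜ, f i ≡ b i [ZMOD 4]) ∧ ∀ i ∈ tail, a ≡ b i [ZMOD 4] := by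
  refine ⟨fun h => ⟨fun i hi => ?_, fun i hi => (withTail_modEq_four hi).symm.trans (h i)⟩,
    fun ⟨hhead, htail⟩ i => ?_⟩
  · rw [← withTail_apply (f := f) (a := a) hi]
    exact h i
  · by_cases hi : i ∈ tail
    · exact (withTail_modEq_four hi).trans (htail i hi)
    · rw [withTail_apply (Finset.mem_compl.2 hi)]
      exact hhead i (Finset.mem_compl.2 hi)

end Coordinates

section SignedOctads

theorem sum_val_of_mem_octadsContaining_tail {c : Fin 24 → ZMod 2}
    (hc : c ∈ octadsContaining tail) : ∑ i ∈ tailᶜ, ((c i).val : ℤ) = 5 := by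
  have hweight := (mem_octadsContaining.1 hc).2.1
  have hsum := hammingNorm_eq_of_forall_tail fun i => eq_one_of_mem_octadsContaining hc
  rw [ZMod.val_one] at hsum
  omega

/-- The integer vector with entries `± 2` on the support of the binary vector `c`, the negative
ones being those in `N`. -/
def signedWord (c : Fin 24 → ZMod 2) (N : Finset (Fin 24)) (i : Fin 24) : ℤ :=
  2 * (c i).val - if i ∈ N then 4 else 0

theorem signedWord_modEq (c : Fin 24 → ZMod 2) (N : Finset (Fin 24)) (i : Fin 24) :
    signedWord c N i ≡ 2 * (c i).val [ZMOD 4] := by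
  unfold signedWord Int.ModEq
  split_ifs <;> omega

theorem eq_signedWord_iff {c : Fin 24 → ZMod 2} {N : Finset (Fin 24)}
    (hN : N ⊆ supportEquiv _ c) {i : Fin 24} {x : ℤ} :
    x = signedWord c N i ↔ x ^ 2 = 4 * (c i).val ∧ (x = -2 ↔ i ∈ N) := by
  have hsq : x ^ 2 = 4 ↔ x = 2 ∨ x = -2 := sq_eq_sq_iff_eq_or_eq_neg (b := (2 : ℤ))
  rcases zmod_two_eq_zero_or_eq_one (c i) with hc | hc
  · have hi : i ∉ N := fun hi => mem_supportEquiv.1 (hN hi) hc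
    simp only [signedWord, hc, ZMod.val_zero, Nat.cast_zero, mul_zero, hi, if_false, sub_self,
      iff_false, sq_eq_zero_iff]
    omega
  · by_cases hi : i ∈ N <;>
      simp only [signedWord, hc, ZMod.val_one, Nat.cast_one, mul_one, hi, if_true, if_false, hsq,
        iff_true, iff_false] <;>
      omega

theorem sum_signedWord_modEq_iff {c : Fin 24 → ZMod 2} (hc : c ∈ octadsContaining tail)
    {N : Finset (Fin 24)} (hN : N ⊆ supportEquiv _ c \ tail) :
    ∑ i ∈ tailᶜ, signedWord c N i ≡ -2 [ZMOD 8] ↔ Odd N.card := by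
  have hhead : N ⊆ tailᶜ := hN.trans (Finset.sdiff_subset_sdiff (Finset.subset_univ _) subset_rfl)
  have hsum : ∑ i ∈ tailᶜ, signedWord c N i = 10 - 4 * N.card := by
    simp only [signedWord, Finset.sum_sub_distrib, ← Finset.mul_sum, Finset.sum_ite_mem,
      sum_val_of_mem_octadsContaining_tail hc, Finset.inter_eq_right.2 hhead, Finset.sum_const,
      nsmul_eq_mul]
    ring
  rw [hsum, Int.ModEq, Nat.odd_iff]
  omega

open Classical in
/-- The octads through `tail`, together with an odd set of the five remaining points as the
positions of the minus signs. -/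
noncomputable def signedOctads : Finset (Σ _ : Fin 24 → ZMod 2, Finset (Fin 24)) :=
  (octadsContaining tail).sigma fun c =>
    (supportEquiv _ c \ tail).powerset.filter fun N => Odd N.card

theorem mem_signedOctads {c : Fin 24 → ZMod 2} {N : Finset (Fin 24)} :
    ⟨c, N⟩ ∈ signedOctads ↔
      c ∈ octadsContaining tail ∧ N ⊆ supportEquiv _ c \ tail ∧ Odd N.card := by
  simp [signedOctads]

theorem card_signedOctads : signedOctads.card = 336 := by
  have hsigns : ∀ c ∈ octadsContaining tail,
      ((supportEquiv _ c \ tail).powerset.filter fun N => Odd N.card).card = 16 := fun c hc => by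
    have hfive := card_support_sdiff_tail hc
    rw [card_odd_subsets (Finset.card_pos.1 (by omega)), hfive]
    norm_num
  rw [signedOctads, Finset.card_sigma, Finset.sum_congr rfl hsigns, Finset.sum_const,
    card_octadsContaining_of_card_eq_three (by decide)]
  norm_num

end SignedOctads

section TAB

variable {T f : Fin 24 → ℤ} {a : ℤ}

theorem leechInner_self_eq_four_iff (x : Fin 24 → ℤ) :
    leechInner x x = 4 ↔ ∑ i, x i ^ 2 = 32 := by
  rw [leechInner, div_eq_iff (by norm_num)]
  simp only [← pow_two]
  norm_cast

theorem modEq_four_iff {x m : ℤ} {z : ZMod 2} : x ≡ m + 2 * z.val [ZMOD 4] ↔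
    2 ∣ x - m ∧ (if 4 ∣ x - m - 2 then 1 else 0) = z := by
  obtain rfl | rfl := zmod_two_eq_zero_or_eq_one z
  all_goals
    simp only [Int.ModEq, ZMod.val_zero, ZMod.val_one, Nat.cast_zero, Nat.cast_one,
      ite_eq_right_iff, ite_eq_left_iff, one_ne_zero, zero_ne_one, imp_false, not_not]
    omega

theorem isLeech_iff : IsLeech T ↔ ∃ m : ℤ, (m = 0 ∨ m = 1) ∧
    (∃ c ∈ GolayCode, ∀ i, T i ≡ m + 2 * (c i).val [ZMOD 4]) ∧ ∑ i, T i ≡ 4 * m [ZMOD 8] := by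
  refine exists_congr fun m => and_congr_right fun _ => ?_
  simp only [modEq_four_iff, forall_and, ← funext_iff, ← and_assoc]
  rw [Int.modEq_comm, Int.modEq_iff_dvd, and_right_comm, and_comm]
  simp [and_assoc]

theorem mem_TAB_iff : T ∈ TAB ↔ IsLeech T ∧ T 21 = T 23 + 4 ∧ T 22 = T 23 + 4 ∧
    ∑ i ∈ tailᶜ, T i ^ 2 = -(3 * T 23 ^ 2 + 16 * T 23) := by
  have hA : vA 21 = 4 ∧ vA 22 = 0 ∧ vA 23 = -4 := by decide
  have hB : vB 21 = 0 ∧ vB 22 = 4 ∧ vB 23 = -4 := by decide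
  have head_sub {v : Fin 24 → ℤ} (hv : ∀ i ∈ tailᶜ, v i = 0) :
      ∑ i ∈ tailᶜ, (T i - v i) ^ 2 = ∑ i ∈ tailᶜ, T i ^ 2 :=
    Finset.sum_congr rfl fun i hi => by rw [hv i hi, sub_zero]
  refine and_congr_right fun _ => ?_
  -- Comparing `|AT|` and `|BT|` with `|OT|` gives `⟨T, A⟩ = ⟨T, B⟩ = 2`.
  simp only [leechInner_self_eq_four_iff, sum_eq_sum_tail_compl_add, Pi.sub_apply, hA, hB,
    head_sub (v := vA) (by decide), head_sub (v := vB) (by decide)]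
  constructor
  · rintro ⟨hO, hOA, hOB⟩
    have h21 : T 21 = T 23 + 4 := by linarith
    have h22 : T 22 = T 23 + 4 := by linarith
    refine ⟨h21, h22, ?_⟩
    rw [h21, h22] at hO
    linarith
  · rintro ⟨h21, h22, hhead⟩
    rw [h21, h22, hhead]
    refine ⟨?_, ?_, ?_⟩ <;> ring

theorem isLeech_withTail_iff : IsLeech (withTail f a) ↔
    (∃ c ∈ GolayCode, (∀ i ∈ tailᶜ, f i ≡ a % 2 + 2 * (c i).val [ZMOD 4]) ∧
      ∀ i ∈ tail, a ≡ a % 2 + 2 * (c i).val [ZMOD 4]) ∧ ∑ i ∈ tailᶜ, f i ≡ a [ZMOD 8] := by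
  have hsum : ∑ i, withTail f a i ≡ 4 * (a % 2) [ZMOD 8] ↔ ∑ i ∈ tailᶜ, f i ≡ a [ZMOD 8] := by
    rw [sum_eq_sum_tail_compl_add, Finset.sum_congr rfl fun i hi => withTail_apply hi]
    have htail : withTail f a 21 + withTail f a 22 + withTail f a 23 = 3 * a + 8 := by
      simp only [withTail, Fin.coe_ofNat_eq_mod, Nat.reduceMod, lt_self_iff_false, Nat.reduceLT,
        if_true, if_false]
      ring
    rw [htail, Int.ModEq, Int.ModEq]
    omega
  rw [isLeech_iff, ← hsum]
  constructor
  · rintro ⟨m, hm, ⟨c, hc, hT⟩, hsum⟩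
    rw [forall_withTail_modEq_iff] at hT
    obtain rfl : m = a % 2 := by
      have h23 := hT.2 23 (by decide)
      unfold Int.ModEq at h23
      omega
    exact ⟨⟨c, hc, hT⟩, hsum⟩
  · rintro ⟨⟨c, hc, hT⟩, hsum⟩
    exact ⟨a % 2, by omega, ⟨c, hc, forall_withTail_modEq_iff.2 hT⟩, hsum⟩

theorem withTail_mem_TAB_iff : withTail f a ∈ TAB ↔
    (∃ c ∈ GolayCode, (∀ i ∈ tailᶜ, f i ≡ a % 2 + 2 * (c i).val [ZMOD 4]) ∧
      ∀ i ∈ tail, a ≡ a % 2 + 2 * (c i).val [ZMOD 4]) ∧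
    ∑ i ∈ tailᶜ, f i ≡ a [ZMOD 8] ∧ ∑ i ∈ tailᶜ, f i ^ 2 = -(3 * a ^ 2 + 16 * a) := by
  rw [mem_TAB_iff, isLeech_withTail_iff, and_assoc,
    Finset.sum_congr rfl fun i hi => congrArg (· ^ 2) (withTail_apply hi)]
  simp [withTail]

theorem withTail_self_of_mem_TAB (hT : T ∈ TAB) : withTail T (T 23) = T :=
  withTail_self (mem_TAB_iff.1 hT).2.1 (mem_TAB_iff.1 hT).2.2.1

theorem apply_23_of_mem_TAB (hT : T ∈ TAB) :
    T 23 = 0 ∨ T 23 = -4 ∨ T 23 = -2 ∨ T 23 = -3 := by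
  rw [← withTail_self_of_mem_TAB hT, withTail_mem_TAB_iff] at hT
  obtain ⟨⟨c, -, hhead, -⟩, -, hnorm⟩ := hT
  have hnonneg : 0 ≤ ∑ i ∈ tailᶜ, T i ^ 2 := Finset.sum_nonneg fun i _ => sq_nonneg (T i)
  have hodd (h : T 23 % 2 = 1) : 21 ≤ ∑ i ∈ tailᶜ, T i ^ 2 := by
    refine le_of_eq_of_le (by rw [card_tail_compl]; rfl) (card_le_sum_sq fun i hi h0 => ?_)
    have hi := hhead i hi
    unfold Int.ModEq at hi
    omega
  have hlower : -5 ≤ T 23 := by nlinarith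
  have hupper : T 23 ≤ 0 := by nlinarith
  generalize T 23 = a at *
  interval_cases a <;> omega

theorem natCard_mem_TAB_apply_23_eq {α : Type*} {s : Finset α} {F : α → Fin 24 → ℤ}
    (hF : ∀ f, withTail f a ∈ TAB ↔ ∃ p ∈ s, ∀ i ∈ tailᶜ, f i = F p i)
    (hinj : ∀ p ∈ s, ∀ q ∈ s, (∀ i ∈ tailᶜ, F p i = F q i) → p = q) :
    Nat.card {T // T ∈ TAB ∧ T 23 = a} = s.card := by
  refine natCard_subtype_eq_card (f := fun p => withTail (F p) a) (fun p hp q hq h => ?_)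
    fun T => ⟨?_, ?_⟩
  · refine hinj p hp q hq fun i hi => ?_
    rw [← withTail_apply (f := F p) (a := a) hi, ← withTail_apply (f := F q) (a := a) hi]
    exact congrFun h i
  · rintro ⟨hT, rfl⟩
    have hself := withTail_self_of_mem_TAB hT
    obtain ⟨p, hp, hhead⟩ := (hF T).1 (hself.symm ▸ hT)
    exact ⟨p, hp, (withTail_congr hhead).symm.trans hself⟩
  · rintro ⟨p, hp, rfl⟩
    exact ⟨(hF _).2 ⟨p, hp, fun _ _ => rfl⟩, rfl⟩

theorem withTail_zero_mem_TAB_iff : withTail f 0 ∈ TAB ↔ ∀ i ∈ tailᶜ, f i = 0 := by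
  rw [withTail_mem_TAB_iff]
  refine ⟨fun ⟨_, _, hnorm⟩ => eq_zero_of_sum_sq_eq_zero hnorm, fun h => ⟨⟨0, zero_mem _, ?_⟩, ?_⟩⟩
  · simp +contextual [h]
  · simp [Finset.sum_congr rfl h, Finset.sum_congr rfl fun i hi => congrArg (· ^ 2) (h i hi)]

theorem exists_single_of_withTail_neg_four_mem_TAB (h : withTail f (-4) ∈ TAB) :
    ∃ k ∈ tailᶜ, (f k = 4 ∨ f k = -4) ∧ ∀ i ∈ tailᶜ, i ≠ k → f i = 0 := by
  simp only [withTail_mem_TAB_iff, show (-4 : ℤ) % 2 = 0 from rfl, zero_add] at h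
  obtain ⟨⟨c, hc, hhead, htail⟩, -, hnorm⟩ := h
  have hc0 : c = 0 := by
    by_contra h0
    have hzero : ∀ i ∈ tail, c i = 0 := fun i hi => by
      have hi := htail i hi
      generalize c i = z at hi
      decide +revert
    have hweight := hammingNorm_eq_of_forall_tail hzero
    have hlight := four_mul_sum_val_le_sum_sq hhead
    have hheavy := eight_le_hammingNorm_of_mem_golayCode hc h0
    simp only [ZMod.val_zero] at hweight
    omega
  have hdvd : ∀ i ∈ tailᶜ, 4 * (f i / 4) = f i := fun i hi =>
    Int.mul_ediv_cancel' (Int.modEq_zero_iff_dvd.1 (by simpa [hc0] using hhead i hi))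
  have hunit : ∑ i ∈ tailᶜ, (f i / 4) ^ 2 = 1 := by
    rw [Finset.sum_congr rfl fun i hi => by rw [← hdvd i hi, mul_pow], ← Finset.mul_sum] at hnorm
    omega
  obtain ⟨k, hk, hfk, hf⟩ := exists_unit_of_sum_sq_eq_one hunit
  refine ⟨k, hk, ?_, fun i hi hik => ?_⟩
  · have := hdvd k hk
    omega
  · rw [← hdvd i hi, hf i hi hik, mul_zero]

theorem withTail_neg_four_mem_TAB_iff : withTail f (-4) ∈ TAB ↔
    ∃ p ∈ tailᶜ ×ˢ {4, -4}, ∀ i ∈ tailᶜ, f i = (Pi.single p.1 p.2 : Fin 24 → ℤ) i := by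
  constructor
  · intro h
    obtain ⟨k, hk, hfk, hf⟩ := exists_single_of_withTail_neg_four_mem_TAB h
    refine ⟨(k, f k), Finset.mem_product.2 ⟨hk, by simpa using hfk⟩, fun i hi => ?_⟩
    rcases eq_or_ne i k with rfl | hik
    · rw [Pi.single_eq_same]
    · rw [hf i hi hik, Pi.single_eq_of_ne hik]
  · rintro ⟨⟨k, e⟩, hp, hf⟩
    simp only [Finset.mem_product, Finset.mem_insert, Finset.mem_singleton] at hp
    obtain ⟨hk, he⟩ := hp
    have hfk : f k = e := by simp [hf k hk]
    have hf0 : ∀ i ∈ tailᶜ, i ≠ k → f i = 0 := fun i hi hik => by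
      simp [hf i hi, hik]
    refine withTail_mem_TAB_iff.2 ⟨⟨0, zero_mem _, fun i hi => ?_, by decide⟩, ?_, ?_⟩
    · have h4 : 4 ∣ f i := by
        rcases eq_or_ne i k with rfl | hik
        · omega
        · simp [hf0 i hi hik]
      simpa using Int.modEq_zero_iff_dvd.2 h4
    · rw [Finset.sum_eq_single_of_mem k hk hf0, hfk, Int.ModEq]
      omega
    · rw [Finset.sum_eq_single_of_mem k hk fun i hi hik => by rw [hf0 i hi hik, sq, mul_zero], hfk]
      rcases he with rfl | rfl <;> rfl

theorem eq_one_sub_of_sq_eq_one {x : ℤ} {z : ZMod 2} (hsq : x ^ 2 = 1)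
    (h : x ≡ 1 + 2 * z.val [ZMOD 4]) : x = 1 - 2 * z.val := by
  rcases sq_eq_one_iff.1 hsq with rfl | rfl <;> decide +revert

theorem withTail_neg_three_mem_TAB_iff : withTail f (-3) ∈ TAB ↔
    ∃ c ∈ shortenedGolayCode, ∀ i ∈ tailᶜ, f i = 1 - 2 * (c i).val := by
  simp only [withTail_mem_TAB_iff, show (-3 : ℤ) % 2 = 1 from rfl, mem_shortenedGolayCode]
  constructor
  · rintro ⟨⟨c, hc, hhead, htail⟩, -, hnorm⟩
    have hne : ∀ i ∈ tailᶜ, f i ≠ 0 := fun i hi h0 => by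
      have hi := hhead i hi
      unfold Int.ModEq at hi
      omega
    refine ⟨c, ⟨hc, fun i hi => ?_⟩, fun i hi => eq_one_sub_of_sq_eq_one ?_ (hhead i hi)⟩
    · have hi := htail i hi
      generalize c i = z at hi
      decide +revert
    · refine sq_eq_one_of_sum_sq_eq_card hne ?_ i hi
      rw [hnorm, card_tail_compl]
      rfl
  · rintro ⟨c, ⟨hc, hzero⟩, hf⟩
    have hmod (z : ZMod 2) : 1 - 2 * (z.val : ℤ) ≡ 1 + 2 * z.val [ZMOD 4] := by decide +revert
    have hsq (z : ZMod 2) : (1 - 2 * (z.val : ℤ)) ^ 2 = 1 := by decide +revert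
    refine ⟨⟨c, hc, fun i hi => hf i hi ▸ hmod (c i), fun i hi => ?_⟩, ?_, ?_⟩
    · rw [hzero i hi]
      decide
    · have hweight := hammingNorm_eq_of_forall_tail hzero
      have hfour := four_dvd_hammingNorm_of_mem_golayCode hc
      rw [Finset.sum_congr rfl hf, Finset.sum_sub_distrib, ← Finset.mul_sum, Finset.sum_const,
        card_tail_compl]
      simp only [Int.ModEq, ZMod.val_zero, nsmul_eq_mul] at hweight ⊢
      omega
    · rw [Finset.sum_congr rfl fun i hi => (congrArg (· ^ 2) (hf i hi)).trans (hsq (c i)),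
        Finset.sum_const, card_tail_compl]
      norm_num

theorem exists_octad_of_withTail_neg_two_mem_TAB (h : withTail f (-2) ∈ TAB) :
    ∃ c ∈ octadsContaining tail, ∀ i ∈ tailᶜ, f i ^ 2 = 4 * (c i).val := by
  simp only [withTail_mem_TAB_iff, show (-2 : ℤ) % 2 = 0 from rfl, zero_add] at h
  obtain ⟨⟨c, hc, hhead, htail⟩, -, hnorm⟩ := h
  have hone : ∀ i ∈ tail, c i = 1 := fun i hi => by
    have hi := htail i hi
    generalize c i = z at hi
    decide +revert
  have hc0 : c ≠ 0 := fun h0 => by simpa [h0] using hone 21 (by decide)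
  have hweight := hammingNorm_eq_of_forall_tail hone
  have hlight := four_mul_sum_val_le_sum_sq hhead
  have hheavy := eight_le_hammingNorm_of_mem_golayCode hc hc0
  rw [ZMod.val_one] at hweight
  refine ⟨c, mem_octadsContaining.2 ⟨hc, by omega, fun i hi => ?_⟩, fun i hi => ?_⟩
  · simp [hone i hi]
  · have hle := fun j hj => four_mul_val_le_sq (hhead j hj)
    refine ((Finset.sum_eq_sum_iff_of_le hle).1 ?_ i hi).symm
    rw [← Finset.mul_sum]
    omega

theorem withTail_neg_two_mem_TAB_iff : withTail f (-2) ∈ TAB ↔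
    ∃ p ∈ signedOctads, ∀ i ∈ tailᶜ, f i = signedWord p.1 p.2 i := by
  constructor
  · intro h
    obtain ⟨c, hc, hsq⟩ := exists_octad_of_withTail_neg_two_mem_TAB h
    let N := (supportEquiv _ c \ tail).filter fun i => f i = -2
    have hN : N ⊆ supportEquiv _ c \ tail := Finset.filter_subset _ _
    have hf : ∀ i ∈ tailᶜ, f i = signedWord c N i := fun i hi => by
      refine (eq_signedWord_iff (hN.trans Finset.sdiff_subset)).2 ⟨hsq i hi, fun hneg => ?_,
        fun hi => (Finset.mem_filter.1 hi).2⟩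
      have hci : c i ≠ 0 := fun h0 => by simpa [h0, hneg] using hsq i hi
      simpa [N, hci, hneg] using hi
    have hodd : Odd N.card := by
      rw [← sum_signedWord_modEq_iff hc hN, ← Finset.sum_congr rfl hf]
      exact (withTail_mem_TAB_iff.1 h).2.1
    exact ⟨⟨c, N⟩, mem_signedOctads.2 ⟨hc, hN, hodd⟩, hf⟩
  · rintro ⟨⟨c, N⟩, hp, hf⟩
    obtain ⟨hc, hN, hodd⟩ := mem_signedOctads.1 hp
    have hsq : ∀ i ∈ tailᶜ, f i ^ 2 = 4 * (c i).val := fun i hi =>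
      ((eq_signedWord_iff (hN.trans Finset.sdiff_subset)).1 (hf i hi)).1
    refine withTail_mem_TAB_iff.2 ⟨⟨c, (mem_octadsContaining.1 hc).1, fun i hi => ?_,
      fun i hi => ?_⟩, ?_, ?_⟩
    · rw [hf i hi]
      exact (signedWord_modEq c N i).trans (by simp)
    · rw [eq_one_of_mem_octadsContaining hc hi]
      decide
    · rwa [Finset.sum_congr rfl hf, sum_signedWord_modEq_iff hc hN]
    · rw [Finset.sum_congr rfl hsq, ← Finset.mul_sum, sum_val_of_mem_octadsContaining_tail hc]
      norm_num

theorem natCard_mem_TAB_apply_23_eq_zero : Nat.card {T // T ∈ TAB ∧ T 23 = 0} = 1 :=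
  natCard_mem_TAB_apply_23_eq (s := {()}) (F := fun _ _ => 0)
    (fun f => by simpa using withTail_zero_mem_TAB_iff) (by simp)

theorem natCard_mem_TAB_apply_23_eq_neg_four : Nat.card {T // T ∈ TAB ∧ T 23 = -4} = 42 := by
  rw [natCard_mem_TAB_apply_23_eq (s := tailᶜ ×ˢ {4, -4})
    (F := fun p => (Pi.single p.1 p.2 : Fin 24 → ℤ)), Finset.card_product, card_tail_compl]
  · rfl
  · exact fun f => withTail_neg_four_mem_TAB_iff
  · rintro ⟨k, e⟩ hp ⟨l, e'⟩ - h
    simp only [Finset.mem_product, Finset.mem_insert, Finset.mem_singleton] at hp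
    have hk : e = (Pi.single l e' : Fin 24 → ℤ) k := by simpa using h k hp.1
    rcases eq_or_ne k l with rfl | hkl
    · rw [hk, Pi.single_eq_same]
    · rw [Pi.single_eq_of_ne hkl] at hk
      omega

theorem natCard_mem_TAB_apply_23_eq_neg_two : Nat.card {T // T ∈ TAB ∧ T 23 = -2} = 336 := by
  rw [natCard_mem_TAB_apply_23_eq fun f => withTail_neg_two_mem_TAB_iff, card_signedOctads]
  rintro ⟨c, N⟩ hp ⟨d, M⟩ hq h
  obtain ⟨hc, hN, -⟩ := mem_signedOctads.1 hp
  obtain ⟨hd, hM, -⟩ := mem_signedOctads.1 hq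
  have hsigned (i) (hi : i ∈ tailᶜ) : (c i).val = (d i).val ∧ (i ∈ N ↔ i ∈ M) := by
    have hcN : signedWord c N i ^ 2 = 4 * (c i).val ∧ (signedWord c N i = -2 ↔ i ∈ N) :=
      (eq_signedWord_iff (hN.trans Finset.sdiff_subset)).1 rfl
    have hdM : signedWord c N i ^ 2 = 4 * (d i).val ∧ (signedWord c N i = -2 ↔ i ∈ M) :=
      (eq_signedWord_iff (hM.trans Finset.sdiff_subset)).1 (h i hi)
    exact ⟨by omega, hcN.2.symm.trans hdM.2⟩
  obtain rfl : c = d := by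
    funext i
    by_cases hi : i ∈ tail
    · rw [eq_one_of_mem_octadsContaining hc hi, eq_one_of_mem_octadsContaining hd hi]
    · exact ZMod.val_injective 2 (hsigned i (Finset.mem_compl.2 hi)).1
  obtain rfl : N = M := by
    ext i
    by_cases hi : i ∈ tail
    · exact iff_of_false (fun h => (Finset.mem_sdiff.1 (hN h)).2 hi)
        fun h => (Finset.mem_sdiff.1 (hM h)).2 hi
    · exact (hsigned i (Finset.mem_compl.2 hi)).2
  rfl

theorem natCard_mem_TAB_apply_23_eq_neg_three : Nat.card {T // T ∈ TAB ∧ T 23 = -3} = 512 := by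
  rw [natCard_mem_TAB_apply_23_eq fun f => withTail_neg_three_mem_TAB_iff, card_shortenedGolayCode]
  intro c hc d hd h
  rw [mem_shortenedGolayCode] at hc hd
  funext i
  by_cases hi : i ∈ tail
  · rw [hc.2 i hi, hd.2 i hi]
  · have h := h i (Finset.mem_compl.2 hi)
    exact ZMod.val_injective 2 (by omega)

theorem withTail_mem_TAB_of_apply_23_eq (hT : T ∈ TAB) (ha : T 23 = a) : withTail T a ∈ TAB := by
  rwa [← ha, withTail_self_of_mem_TAB hT]

theorem natCard_head_ne_zero {S : Finset (Fin 24)} (hS : S ⊆ tailᶜ)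
    (h : ∀ i ∈ tailᶜ, T i ≠ 0 ↔ i ∈ S) :
    Nat.card {i : Fin 24 // i.val < 21 ∧ T i ≠ 0} = S.card := by
  refine Nat.subtype_card S fun i => ?_
  rw [← mem_tail_compl]
  exact ⟨fun hi => ⟨hS hi, (h i (hS hi)).2 hi⟩, fun hi => (h i hi.1).1 hi.2⟩

theorem isType0_iff (hT : T ∈ TAB) : IsType0 T ↔ T 23 = 0 := by
  refine ⟨fun h => by rw [h]; rfl, fun h23 => ?_⟩
  have hhead := withTail_zero_mem_TAB_iff.1 (withTail_mem_TAB_of_apply_23_eq hT h23)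
  rw [← withTail_self_of_mem_TAB hT, h23, withTail_congr (g := 0) hhead]
  unfold IsType0
  decide

theorem isType1_iff (hT : T ∈ TAB) : IsType1 T ↔ T 23 = -4 := by
  refine ⟨fun h => h.2.2.2.2, fun h23 => ?_⟩
  obtain ⟨-, h21, h22, -⟩ := mem_TAB_iff.1 hT
  rw [h23] at h21 h22
  obtain ⟨k, hk, hTk, hT0⟩ := exists_single_of_withTail_neg_four_mem_TAB
    (withTail_mem_TAB_of_apply_23_eq hT h23)
  refine ⟨fun i hi => ?_, ?_, h21, h22, h23⟩
  · rcases eq_or_ne i k with rfl | hik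
    exacts [Or.inr hTk, Or.inl (hT0 i (mem_tail_compl.2 hi) hik)]
  · refine natCard_head_ne_zero (S := {k}) (Finset.singleton_subset_iff.2 hk) fun i hi => ?_
    rw [Finset.mem_singleton]
    refine ⟨fun h => by_contra fun hik => h (hT0 i hi hik), ?_⟩
    rintro rfl
    omega

theorem isType2_iff (hT : T ∈ TAB) : IsType2 T ↔ T 23 = -2 := by
  refine ⟨fun h => h.2.2.2.2, fun h23 => ?_⟩
  obtain ⟨-, h21, h22, -⟩ := mem_TAB_iff.1 hT
  rw [h23] at h21 h22
  obtain ⟨c, hc, hsq⟩ := exists_octad_of_withTail_neg_two_mem_TAB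
    (withTail_mem_TAB_of_apply_23_eq hT h23)
  have hentry (i) (hi : i ∈ tailᶜ) :
      T i = 0 ∧ c i = 0 ∨ (T i = 2 ∨ T i = -2) ∧ c i = 1 := by
    have hi := hsq i hi
    rcases zmod_two_eq_zero_or_eq_one (c i) with h | h
    · exact Or.inl ⟨by simpa [h] using hi, h⟩
    · exact Or.inr ⟨sq_eq_sq_iff_eq_or_eq_neg.1 (by rw [hi, h, ZMod.val_one]; rfl), h⟩
  refine ⟨fun i hi => (hentry i (mem_tail_compl.2 hi)).imp And.left And.left, ?_, h21, h22, h23⟩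
  rw [← card_support_sdiff_tail hc]
  refine natCard_head_ne_zero
    (Finset.sdiff_subset_sdiff (Finset.subset_univ _) subset_rfl) fun i hi => ?_
  rw [Finset.mem_sdiff, mem_supportEquiv, and_iff_left (Finset.mem_compl.1 hi)]
  rcases hentry i hi with ⟨h, hci⟩ | ⟨h | h, hci⟩ <;> simp [h, hci]

theorem isType3_iff (hT : T ∈ TAB) : IsType3 T ↔ T 23 = -3 := by
  refine ⟨fun h => h.2.2.2, fun h23 => ?_⟩
  obtain ⟨-, h21, h22, -⟩ := mem_TAB_iff.1 hT
  rw [h23] at h21 h22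
  obtain ⟨c, -, hTc⟩ := withTail_neg_three_mem_TAB_iff.1 (withTail_mem_TAB_of_apply_23_eq hT h23)
  refine ⟨fun i hi => ?_, h21, h22, h23⟩
  rw [hTc i (mem_tail_compl.2 hi)]
  generalize c i = z
  decide +revert

end TAB

/-- the 891 points of `T_AB` consist of 1 vector of type 0,
42 of type 1, 336 of type 2 and 512 of type 3. -/
theorem TAB_types :
    (∀ T ∈ TAB, IsType0 T ∨ IsType1 T ∨ IsType2 T ∨ IsType3 T) ∧
    Nat.card {T : Fin 24 → ℤ // T ∈ TAB ∧ IsType0 T} = 1 ∧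
    Nat.card {T : Fin 24 → ℤ // T ∈ TAB ∧ IsType1 T} = 42 ∧
    Nat.card {T : Fin 24 → ℤ // T ∈ TAB ∧ IsType2 T} = 336 ∧
    Nat.card {T : Fin 24 → ℤ // T ∈ TAB ∧ IsType3 T} = 512 := by
  simp only [and_congr_right isType0_iff, and_congr_right isType1_iff,
    and_congr_right isType2_iff, and_congr_right isType3_iff]
  refine ⟨fun T hT => ?_, natCard_mem_TAB_apply_23_eq_zero, natCard_mem_TAB_apply_23_eq_neg_four,
    natCard_mem_TAB_apply_23_eq_neg_two, natCard_mem_TAB_apply_23_eq_neg_three⟩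
  rw [isType0_iff hT, isType1_iff hT, isType2_iff hT, isType3_iff hT]
  exact apply_23_of_mem_TAB hT
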